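/- Uniform fractional-moment bound for the singular integral of an exactly scale-invariant field (Lemma A of the multifractal analysis, d = 2): Let (X̄_ε)_{ε∈(0,1]} be a family of jointly measurable centered Gaussian fields on ℝ² with covariance E[X̄_ε(x)X̄_ε(y)] equal to 0 if |x−y| > 1, to ln(1/|x−y|) if ε ≤ |x−y| ≤ 1, and to ln(1/ε) + 2(1 − |x−y|^{1/2}/ε^{1/2}) if |x−y| ≤ ε. Let γ ∈ [0,2) and let a ∈ (0,1] satisfy (2 − γ²/2)a − (γ²/2)a² > 0. Then there exists a constant C > 0 such that for all ε ∈ (0,1]: E[( ∫_{[0,1/2]²} exp(γ X̄_ε(v) − (γ²/2) E[X̄_ε(v)²]) · (|v| + ε)^{−γ²} dv )^a] ≤ C. -/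

import Mathlib

open MeasureTheory ProbabilityTheory Filter

noncomputable section

def IsCenteredGaussian {Ω : Type*} [MeasurableSpace Ω] (P : Measure Ω) (Z : Ω → ℝ) : Prop :=
  ∃ v : NNReal, Measure.map Z P = gaussianReal 0 v

/-- The covariance of the white-noise decomposition of the exactly scale invariant
log-correlated field on `ℝ²`. -/
def exactCov (ε : ℝ) (r : ℝ) : ℝ :=
  if 1 < r then 0
  else if ε ≤ r then Real.log (1 / r)
  else Real.log (1 / ε) + 2 * (1 - Real.sqrt r / Real.sqrt ε)

/-!
Cut the domain into the dyadic shells `|v| ≈ l = 2⁻ⁿ ≥ ε`; since `x ↦ x ^ a` is subadditive, it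
suffices to sum the `a`-th moments of the shells, on which the weight is of order `l ^ (-β)`.

On the ball of radius `l`, let `Z` be the average of the field over about `log (1 / ε)` equally
spaced points of a segment of length `l`. Both `Var Z` and the covariance of `Z` with the field at
any point of the ball are `log (1 / l) + O(1)`: `Z` is the part of the field common to the whole
ball. Hölder's inequality against `exp (-γ (1 - a) Z)` thus bounds the `a`-th moment of the chaos
mass by a constant times `l ^ (a (d + γ² (1 - a) / 2))`.

The shells then sum to a geometric series as soon as `β < d + γ² (1 - a) / 2`, which for `d = 2` and
`β = γ²` is `(2 - γ² / 2) a - (γ² / 2) a² > 0` after multiplication by `a`.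
-/

open scoped BigOperators

/-- A jointly measurable centered Gaussian field: every finite linear combination of its values is
a centered Gaussian variable. -/
structure IsCenteredGaussianField {E Ω : Type*} [MeasurableSpace E] [MeasurableSpace Ω]
    (P : Measure Ω) (Y : E → Ω → ℝ) : Prop where
  measurable : Measurable (Function.uncurry Y)
  isCenteredGaussian_sum : ∀ (m : ℕ) (xs : Fin m → E) (c : Fin m → ℝ),
    IsCenteredGaussian P fun ω => ∑ i, c i * Y (xs i) ω

/-- The field `Y` is log-correlated on the unit ball, with cutoff at scale `ε`: its covariance is
`log (1 / max ‖x - y‖ ε)` up to an additive error `c`. -/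
def IsLogCorrelated {E Ω : Type*} [NormedAddCommGroup E] [MeasurableSpace Ω]
    (P : Measure Ω) (Y : E → Ω → ℝ) (ε c : ℝ) : Prop :=
  ∀ x y : E, ‖x‖ ≤ 1 → ‖y‖ ≤ 1 →
    |∫ ω, Y x ω * Y y ω ∂P + Real.log (max ‖x - y‖ ε)| ≤ c

/-- The Wick exponential of `γ Y`, the density at cutoff level of the multiplicative chaos measure;
for centered Gaussian `Y v` it is normalized to have mean one. -/
def wickExp {E Ω : Type*} [MeasurableSpace Ω] (P : Measure Ω) (γ : ℝ) (Y : E → Ω → ℝ)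
    (v : E) (ω : Ω) : ℝ :=
  Real.exp (γ * Y v ω - γ ^ 2 / 2 * ∫ ω', (Y v ω') ^ 2 ∂P)

/-- The dyadic shell around the origin at scale `2⁻ⁿ`, where distances below `ε` are read as `ε`:
the shells beyond the scale `ε` are empty. -/
def dyadicShell (E : Type*) [NormedAddCommGroup E] (ε : ℝ) (n : ℕ) : Set E :=
  {v | max ‖v‖ ε ∈ Set.Ioc ((2⁻¹ : ℝ) ^ (n + 1)) (2⁻¹ ^ n)}

section Inequalities

lemma ennreal_rpow_tsum_le_tsum_rpow (f : ℕ → ENNReal) {a : ℝ} (ha0 : 0 < a) (ha1 : a ≤ 1) :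
    (∑' n, f n) ^ a ≤ ∑' n, f n ^ a := by
  have partial_sums : ∀ n, (∑ k ∈ Finset.range n, f k) ^ a ≤ ∑ k ∈ Finset.range n, f k ^ a :=
    fun n => Finset.le_sum_of_subadditive (· ^ a) (ENNReal.zero_rpow_of_pos ha0).le
      (fun x y => ENNReal.rpow_add_le_add_rpow x y ha0.le ha1) _ _
  have tendsto_rpow : Tendsto (fun n => (∑ k ∈ Finset.range n, f k) ^ a) atTop
      (nhds ((∑' n, f n) ^ a)) :=
    (ENNReal.continuous_rpow_const.tendsto _).comp ENNReal.summable.hasSum.tendsto_sum_nat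
  exact le_of_tendsto' tendsto_rpow fun n => (partial_sums n).trans (ENNReal.sum_le_tsum _)

lemma ofReal_exp_rpow (t a : ℝ) :
    ENNReal.ofReal (Real.exp t) ^ a = ENNReal.ofReal (Real.exp (t * a)) := by
  rw [ENNReal.ofReal_rpow_of_pos (Real.exp_pos _), ← Real.exp_mul]

lemma inv_rpow_le_two_rpow_abs_mul {r t : ℝ} (hr : 0 < r) (hrt : r / 2 ≤ t) (htr : t ≤ 2 * r)
    (β : ℝ) : (t ^ β)⁻¹ ≤ 2 ^ |β| * r ^ (-β) := by
  have ht : 0 < t := (half_pos hr).trans_le hrt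
  have log_div_le : |Real.log (t / r)| ≤ Real.log 2 := by
    rw [abs_le, ← Real.log_inv]
    constructor <;> refine Real.log_le_log (by positivity) ?_
    · rw [le_div_iff₀ hr]; linarith
    · rwa [div_le_iff₀ hr]
  have ratio_le : (t / r) ^ (-β) ≤ 2 ^ |β| := by
    rw [Real.rpow_def_of_pos (by positivity), Real.rpow_def_of_pos two_pos, Real.exp_le_exp]
    calc Real.log (t / r) * -β ≤ |Real.log (t / r) * -β| := le_abs_self _
      _ = |Real.log (t / r)| * |β| := by rw [abs_mul, abs_neg]
      _ ≤ Real.log 2 * |β| := by gcongr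
  calc (t ^ β)⁻¹ = (t / r) ^ (-β) * r ^ (-β) := by
        rw [← Real.mul_rpow (by positivity) hr.le, div_mul_cancel₀ _ hr.ne', Real.rpow_neg ht.le]
    _ ≤ 2 ^ |β| * r ^ (-β) := by gcongr

lemma ofReal_integral_rpow_le_lintegral_rpow {α : Type*} [MeasurableSpace α] {μ : Measure α}
    {f : α → ℝ} (hf : 0 ≤ f) (hfm : AEStronglyMeasurable f μ) {a : ℝ} (ha : 0 ≤ a) :
    ENNReal.ofReal ((∫ x, f x ∂μ) ^ a) ≤ (∫⁻ x, ENNReal.ofReal (f x) ∂μ) ^ a := by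
  rw [← ENNReal.ofReal_rpow_of_nonneg (integral_nonneg hf) ha,
    integral_eq_lintegral_of_nonneg_ae (Eventually.of_forall hf) hfm]
  gcongr
  exact ENNReal.ofReal_toReal_le

-- Hölder for `M ^ a = (M * exp (-t * (1 - a) * Z)) ^ a * exp (a * t * Z) ^ (1 - a)`.
lemma lintegral_rpow_le_exp_tilt {Ω : Type*} [MeasurableSpace Ω] {P : Measure Ω}
    {M : Ω → ENNReal} {Z : Ω → ℝ} (hM : Measurable M) (hZ : Measurable Z) (t : ℝ) {a : ℝ}
    (ha0 : 0 ≤ a) (ha1 : a ≤ 1) :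
    ∫⁻ ω, M ω ^ a ∂P ≤
      (∫⁻ ω, M ω * ENNReal.ofReal (Real.exp (-(t * (1 - a)) * Z ω)) ∂P) ^ a *
        (∫⁻ ω, ENNReal.ofReal (Real.exp (a * t * Z ω)) ∂P) ^ (1 - a) := by
  refine le_trans (lintegral_mono fun ω => le_of_eq ?_)
    (ENNReal.lintegral_mul_norm_pow_le (by fun_prop) (by fun_prop) ha0 (sub_nonneg.2 ha1)
      (add_sub_cancel a 1))
  have exponents_cancel : -(t * (1 - a)) * Z ω * a + a * t * Z ω * (1 - a) = 0 := by ring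
  rw [ENNReal.mul_rpow_of_nonneg _ _ ha0, mul_assoc, ofReal_exp_rpow, ofReal_exp_rpow,
    ← ENNReal.ofReal_mul (Real.exp_pos _).le, ← Real.exp_add, exponents_cancel, Real.exp_zero,
    ENNReal.ofReal_one, mul_one]

lemma integral_expect {ι α : Type*} [MeasurableSpace α] {μ : Measure α} (s : Finset ι)
    {f : ι → α → ℝ} (hf : ∀ i ∈ s, Integrable (f i) μ) :
    ∫ x, s.expect (f · x) ∂μ = s.expect fun i => ∫ x, f i x ∂μ := by
  simp only [Finset.expect_eq_sum_div_card, integral_div, integral_finsetSum s hf]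

end Inequalities

section Gaussian

variable {Ω : Type*} [MeasurableSpace Ω] {P : Measure Ω}

lemma IsCenteredGaussian.exists_hasLaw {Z : Ω → ℝ} (hZ : IsCenteredGaussian P Z) :
    ∃ v : NNReal, HasLaw Z (gaussianReal 0 v) P := by
  obtain ⟨v, hv⟩ := hZ
  exact ⟨v, aemeasurable_of_map_neZero (by rw [hv]; infer_instance), hv⟩

lemma IsCenteredGaussian.memLp_two {Z : Ω → ℝ} (hZ : IsCenteredGaussian P Z) : MemLp Z 2 P := by
  obtain ⟨v, hv⟩ := hZ.exists_hasLaw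
  have memLp_id : MemLp id 2 (P.map Z) := hv.map_eq ▸ memLp_id_gaussianReal 2
  exact (memLp_map_measure_iff memLp_id.aestronglyMeasurable hv.aemeasurable).1 memLp_id

lemma IsCenteredGaussian.lintegral_exp {Z : Ω → ℝ} (hZ : IsCenteredGaussian P Z) :
    ∫⁻ ω, ENNReal.ofReal (Real.exp (Z ω)) ∂P
      = ENNReal.ofReal (Real.exp ((∫ ω, Z ω ^ 2 ∂P) / 2)) := by
  obtain ⟨v, hv⟩ := hZ.exists_hasLaw
  have second_moment : ∫ ω, Z ω ^ 2 ∂P = v := by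
    have variance_eq := variance_of_integral_eq_zero hv.aemeasurable
      (by rw [hv.integral_eq, integral_id_gaussianReal])
    rw [← variance_eq, hv.variance_eq, variance_id_gaussianReal]
  have mgf_one : ∫ ω, Real.exp (Z ω) ∂P = Real.exp (v / 2) := by
    simpa [mgf] using mgf_gaussianReal hv.map_eq 1
  have integrable_exp : Integrable (fun ω => Real.exp (Z ω)) P :=
    .of_integral_ne_zero (by rw [mgf_one]; positivity)
  rw [← ofReal_integral_eq_lintegral_ofReal integrable_exp
    (Eventually.of_forall fun ω => (Real.exp_pos _).le), mgf_one, second_moment]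

lemma integral_add_mul_sq {Y Z : Ω → ℝ} (hY : MemLp Y 2 P) (hZ : MemLp Z 2 P) (s t : ℝ) :
    ∫ ω, (s * Y ω + t * Z ω) ^ 2 ∂P =
      s ^ 2 * ∫ ω, Y ω ^ 2 ∂P + 2 * s * t * ∫ ω, Y ω * Z ω ∂P + t ^ 2 * ∫ ω, Z ω ^ 2 ∂P := by
  have expand : ∀ ω, (s * Y ω + t * Z ω) ^ 2 =
      s ^ 2 * Y ω ^ 2 + 2 * s * t * (Y ω * Z ω) + t ^ 2 * Z ω ^ 2 := fun ω => by ring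
  have hYY : Integrable (fun ω => s ^ 2 * Y ω ^ 2) P := hY.integrable_sq.const_mul _
  have hYZ : Integrable (fun ω => 2 * s * t * (Y ω * Z ω)) P := (hY.integrable_mul hZ).const_mul _
  have hZZ : Integrable (fun ω => t ^ 2 * Z ω ^ 2) P := hZ.integrable_sq.const_mul _
  simp only [expand]
  rw [integral_add (by exact hYY.add hYZ) hZZ, integral_add hYY hYZ]
  simp only [integral_const_mul]

end Gaussian

section WickExp

variable {E Ω : Type*} [MeasurableSpace Ω] {P : Measure Ω} {Y : E → Ω → ℝ} {Z : Ω → ℝ}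

lemma lintegral_wickExp_mul_exp {v : E}
    (hYZ : ∀ s t, IsCenteredGaussian P fun ω => s * Y v ω + t * Z ω) (γ s : ℝ) :
    ∫⁻ ω, ENNReal.ofReal (wickExp P γ Y v ω) * ENNReal.ofReal (Real.exp (s * Z ω)) ∂P =
      ENNReal.ofReal (Real.exp (γ * s * ∫ ω, Y v ω * Z ω ∂P + s ^ 2 / 2 * ∫ ω, Z ω ^ 2 ∂P)) := by
  have hY2 : MemLp (Y v) 2 P := by simpa using (hYZ 1 0).memLp_two
  have hZ2 : MemLp Z 2 P := by simpa using (hYZ 0 1).memLp_two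
  have split : ∀ ω, ENNReal.ofReal (wickExp P γ Y v ω) * ENNReal.ofReal (Real.exp (s * Z ω)) =
      ENNReal.ofReal (Real.exp (-(γ ^ 2 / 2 * ∫ ω, Y v ω ^ 2 ∂P))) *
        ENNReal.ofReal (Real.exp (γ * Y v ω + s * Z ω)) := by
    intro ω
    rw [wickExp, ← ENNReal.ofReal_mul (Real.exp_pos _).le, ← ENNReal.ofReal_mul (Real.exp_pos _).le,
      ← Real.exp_add, ← Real.exp_add]
    ring_nf
  simp only [split]
  rw [lintegral_const_mul' _ _ ENNReal.ofReal_ne_top, (hYZ γ s).lintegral_exp,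
    integral_add_mul_sq hY2 hZ2, ← ENNReal.ofReal_mul (Real.exp_pos _).le, ← Real.exp_add]
  ring_nf

variable [MeasurableSpace E]

lemma measurable_uncurry_wickExp [SFinite P] (hY : Measurable (Function.uncurry Y)) (γ : ℝ) :
    Measurable (Function.uncurry (wickExp P γ Y)) := by
  have measurable_variance : Measurable fun v => ∫ ω, Y v ω ^ 2 ∂P :=
    (hY.pow_const 2).stronglyMeasurable.integral_prod_right'.measurable
  exact ((hY.const_mul γ).sub ((measurable_variance.comp measurable_fst).const_mul _)).exp

variable {μ : Measure E} [SFinite μ] {S : Set E}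

lemma lintegral_setLIntegral_wickExp_mul_exp_le [SFinite P] (hY : Measurable (Function.uncurry Y))
    (hZ : Measurable Z) (hYZ : ∀ v s t, IsCenteredGaussian P fun ω => s * Y v ω + t * Z ω)
    {V D γ s : ℝ} (hV : ∫ ω, Z ω ^ 2 ∂P ≤ V) (hD : ∀ v ∈ S, D ≤ ∫ ω, Y v ω * Z ω ∂P)
    (hs : γ * s ≤ 0) :
    ∫⁻ ω, (∫⁻ v in S, ENNReal.ofReal (wickExp P γ Y v ω) ∂μ) *
        ENNReal.ofReal (Real.exp (s * Z ω)) ∂P ≤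
      ENNReal.ofReal (Real.exp (γ * s * D + s ^ 2 / 2 * V)) * μ S := by
  have hW : Measurable fun p : Ω × E => wickExp P γ Y p.2 p.1 :=
    (measurable_uncurry_wickExp hY γ).comp measurable_swap
  simp only [← lintegral_mul_const' _ _ ENNReal.ofReal_ne_top]
  rw [lintegral_lintegral_swap (hW.ennreal_ofReal.mul (by fun_prop)).aemeasurable]
  simp only [lintegral_wickExp_mul_exp (hYZ _)]
  refine (setLIntegral_mono measurable_const fun v hv => ?_).trans (setLIntegral_const _ _).le
  gcongr ENNReal.ofReal (Real.exp (?_ + _ * ?_))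
  exact mul_le_mul_of_nonpos_left (hD v hv) hs

-- Among the tilts `exp (-s * Z)`, the choice `s = γ * (1 - a)` is optimal when `V = D`.
lemma lintegral_rpow_setLIntegral_wickExp_le [Nonempty E] [SFinite P]
    (hY : Measurable (Function.uncurry Y)) (hZ : Measurable Z)
    (hYZ : ∀ v s t, IsCenteredGaussian P fun ω => s * Y v ω + t * Z ω)
    {V D : ℝ} (hV : ∫ ω, Z ω ^ 2 ∂P ≤ V) (hD : ∀ v ∈ S, D ≤ ∫ ω, Y v ω * Z ω ∂P)
    (γ : ℝ) {a : ℝ} (ha0 : 0 ≤ a) (ha1 : a ≤ 1) :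
    ∫⁻ ω, (∫⁻ v in S, ENNReal.ofReal (wickExp P γ Y v ω) ∂μ) ^ a ∂P ≤
      (ENNReal.ofReal (Real.exp (γ ^ 2 * (1 - a) * (V / 2 - D))) * μ S) ^ a := by
  have ha1' : 0 ≤ 1 - a := sub_nonneg.2 ha1
  have hZ_gauss : IsCenteredGaussian P fun ω => a * γ * Z ω := by
    simpa using hYZ (Classical.arbitrary E) 0 (a * γ)
  have measurable_mass : Measurable fun ω => ∫⁻ v in S, ENNReal.ofReal (wickExp P γ Y v ω) ∂μ :=
    (measurable_uncurry_wickExp hY γ).ennreal_ofReal.lintegral_prod_left'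
  have tilted_mass := lintegral_setLIntegral_wickExp_mul_exp_le (μ := μ) (γ := γ)
    (s := -(γ * (1 - a))) hY hZ hYZ hV hD (by nlinarith [mul_nonneg (sq_nonneg γ) ha1'])
  have exp_moment : ∫⁻ ω, ENNReal.ofReal (Real.exp (a * γ * Z ω)) ∂P ≤
      ENNReal.ofReal (Real.exp ((a * γ) ^ 2 * V / 2)) := by
    rw [hZ_gauss.lintegral_exp]
    simp only [mul_pow, integral_const_mul] at hV ⊢
    gcongr
  refine (lintegral_rpow_le_exp_tilt measurable_mass hZ γ ha0 ha1).trans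
    ((mul_le_mul' (ENNReal.rpow_le_rpow tilted_mass ha0)
      (ENNReal.rpow_le_rpow exp_moment ha1')).trans_eq ?_)
  rw [ENNReal.mul_rpow_of_nonneg _ _ ha0, ENNReal.mul_rpow_of_nonneg _ _ ha0, mul_right_comm,
    ofReal_exp_rpow, ofReal_exp_rpow, ofReal_exp_rpow, ← ENNReal.ofReal_mul (Real.exp_pos _).le,
    ← Real.exp_add]
  ring_nf

end WickExp

section SegmentAverage

lemma sum_range_nat_dist_le {N i : ℕ} (hi : i < N) {g : ℕ → ℝ} (hg : ∀ k < N, 0 ≤ g k) :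
    ∑ j ∈ Finset.range N, g (Nat.dist i j) ≤ 2 * ∑ k ∈ Finset.range N, g k := by
  have dist_mem : ∀ j ∈ Finset.range N, Nat.dist i j ∈ Finset.range N := by
    simp only [Finset.mem_range, Nat.dist]
    omega
  have fiber_card_le : ∀ k, (Finset.range N |>.filter fun j => Nat.dist i j = k).card ≤ 2 := by
    intro k
    refine (Finset.card_le_card (t := {i - k, i + k}) fun j hj => ?_).trans Finset.card_le_two
    have := (Finset.mem_filter.1 hj).2
    simp only [Nat.dist, Finset.mem_insert, Finset.mem_singleton] at this ⊢
    omega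
  rw [← Finset.sum_fiberwise_of_maps_to dist_mem, Finset.mul_sum]
  refine Finset.sum_le_sum fun k hk => ?_
  rw [Finset.sum_congr rfl fun j hj => congrArg g (Finset.mem_filter.1 hj).2, Finset.sum_const,
    nsmul_eq_mul]
  exact mul_le_mul_of_nonneg_right (mod_cast fiber_card_le k) (hg k (Finset.mem_range.1 hk))

-- The term `k = 0` is the junk value `log (N / 0) = 0`.
lemma sum_range_log_div_le (N : ℕ) : ∑ k ∈ Finset.range N, Real.log (N / k) ≤ N := by
  rcases N.eq_zero_or_pos with rfl | hN
  · simp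
  have hN' : (0 : ℝ) < N := mod_cast hN
  have sum_eq : ∑ k ∈ Finset.range N, Real.log (N / k) = Real.log (N ^ N / N.factorial) := by
    have add_last : ∑ k ∈ Finset.range (N + 1), Real.log (N / k) =
        ∑ k ∈ Finset.range N, Real.log (N / k) := by
      rw [Finset.sum_range_succ, div_self hN'.ne', Real.log_one, add_zero]
    rw [← add_last, Finset.sum_range_succ', ← Finset.prod_range_add_one_eq_factorial]
    push_cast
    rw [div_zero, Real.log_zero, add_zero, ← Real.log_prod fun k _ => by positivity,
      Finset.prod_div_distrib, Finset.prod_const, Finset.card_range]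
  rw [sum_eq, Real.log_le_iff_le_exp (by positivity)]
  exact Real.pow_div_factorial_le_exp _ hN'.le N

lemma expect_log_div_nat_dist_le {N : ℕ} (i : Fin N) :
    𝔼 j : Fin N, Real.log (N / Nat.dist i j) ≤ 2 := by
  have hN : (0 : ℝ) < N := mod_cast i.pos
  have log_nonneg : ∀ k < N, 0 ≤ Real.log ((N : ℝ) / k) := by
    intro k hk
    rcases k.eq_zero_or_pos with rfl | hk0
    · simp
    · exact Real.log_nonneg ((one_le_div (mod_cast hk0)).2 (mod_cast hk.le))
  rw [Fintype.expect_eq_sum_div_card, Fintype.card_fin, div_le_iff₀ hN,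
    Fin.sum_univ_eq_sum_range (fun j => Real.log (N / Nat.dist i j))]
  calc _ ≤ 2 * ∑ k ∈ Finset.range N, Real.log (N / k) := sum_range_nat_dist_le i.2 log_nonneg
    _ ≤ 2 * N := by gcongr; exact sum_range_log_div_le N

lemma neg_log_max_le {ε l : ℝ} (hε : 0 < ε) (hl0 : 0 < l) (hl1 : l ≤ 1) {N : ℕ}
    (hN : -Real.log ε ≤ N) (i j : Fin N) :
    -Real.log (max (l * Nat.dist i j / N) ε) ≤
      -Real.log l + ((if i = j then (N : ℝ) else 0) + Real.log (N / Nat.dist i j)) := by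
  have hN0 : (0 : ℝ) < N := mod_cast i.pos
  split_ifs with hij
  · simp only [hij, Nat.dist_self, CharP.cast_eq_zero, mul_zero, zero_div, max_eq_right hε.le,
      div_zero, Real.log_zero, add_zero]
    linarith [Real.log_nonpos hl0.le hl1]
  · have hdist : (0 : ℝ) < Nat.dist i j := mod_cast Nat.dist_pos_of_ne (Fin.val_ne_of_ne hij)
    calc -Real.log (max (l * Nat.dist i j / N) ε) ≤ -Real.log (l * Nat.dist i j / N) :=
          neg_le_neg (Real.log_le_log (by positivity) (le_max_left _ _))
      _ = -Real.log l + (0 + Real.log (N / Nat.dist i j)) := by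
          rw [Real.log_div (by positivity) hN0.ne', Real.log_mul hl0.ne' hdist.ne',
            Real.log_div hN0.ne' hdist.ne']
          ring

-- Once `N ≥ log (1 / ε)`, the diagonal contributes at most one to the average.
lemma expect_neg_log_max_le {ε l : ℝ} (hε : 0 < ε) (hl0 : 0 < l) (hl1 : l ≤ 1) {N : ℕ}
    (hN : -Real.log ε ≤ N) (i : Fin N) :
    𝔼 j : Fin N, -Real.log (max (l * Nat.dist i j / N) ε) ≤ -Real.log l + 3 := by
  have hN0 : (0 : ℝ) < N := mod_cast i.pos
  have : Nonempty (Fin N) := ⟨i⟩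
  calc _ ≤ 𝔼 j : Fin N, (-Real.log l +
          ((if i = j then (N : ℝ) else 0) + Real.log (N / Nat.dist i j))) :=
        Finset.expect_le_expect fun j _ => neg_log_max_le hε hl0 hl1 hN i j
    _ = -Real.log l + (1 + 𝔼 j : Fin N, Real.log (N / Nat.dist i j)) := by
        rw [Finset.expect_add_distrib, Finset.expect_add_distrib, Fintype.expect_const,
          Fintype.expect_eq_sum_div_card (fun j => if i = j then (N : ℝ) else 0)]
        simp [hN0.ne']
    _ ≤ -Real.log l + 3 := by linarith [expect_log_div_nat_dist_le i]

lemma norm_smul_sub_smul_eq_nat_dist {E : Type*} [NormedAddCommGroup E] [NormedSpace ℝ E] {e : E}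
    (he : ‖e‖ = 1) {l : ℝ} (hl : 0 ≤ l) (N i j : ℕ) :
    ‖(l * i / N) • e - (l * j / N) • e‖ = l * Nat.dist i j / N := by
  have cast_dist : (Nat.dist i j : ℝ) = |(i : ℝ) - j| := by
    rw [Nat.dist_eq_max_sub_min, Nat.cast_sub min_le_max, Nat.cast_max, Nat.cast_min,
      max_sub_min_eq_abs, abs_sub_comm]
  rw [← sub_smul, norm_smul, he, mul_one, cast_dist, ← sub_div, ← mul_sub, Real.norm_eq_abs,
    abs_div, abs_mul, abs_of_nonneg hl, Nat.abs_cast]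

lemma exists_points_expect_neg_log_norm_le (E : Type*) [NormedAddCommGroup E] [NormedSpace ℝ E]
    [Nontrivial E] {ε l : ℝ} (hε : 0 < ε) (hl0 : 0 < l) (hl1 : l ≤ 1) :
    ∃ (N : ℕ) (x : Fin N → E), 0 < N ∧ (∀ i, ‖x i‖ ≤ l) ∧
      𝔼 i, 𝔼 j, -Real.log (max ‖x i - x j‖ ε) ≤ -Real.log l + 3 := by
  obtain ⟨e, he⟩ := exists_norm_eq E zero_le_one
  obtain ⟨N, hN⟩ := exists_nat_ge (max 1 (-Real.log ε))
  have hN1 : (1 : ℝ) ≤ N := (le_max_left _ _).trans hN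
  have hN0 : 0 < N := mod_cast hN1
  refine ⟨N, fun i => (l * i / N) • e, hN0, fun i => ?_, ?_⟩
  · have hi : ((i : ℕ) : ℝ) ≤ N := mod_cast i.2.le
    rw [norm_smul, he, mul_one, Real.norm_of_nonneg (by positivity), div_le_iff₀ (by positivity)]
    gcongr
  · simp only [norm_smul_sub_smul_eq_nat_dist he hl0.le]
    exact Finset.expect_le ⟨⟨0, hN0⟩, Finset.mem_univ _⟩ fun i _ =>
      expect_neg_log_max_le hε hl0 hl1 ((le_max_right _ _).trans hN) i

end SegmentAverage

section Averages

variable {ι Ω : Type*} [Fintype ι] [MeasurableSpace Ω] {P : Measure Ω} {f : ι → Ω → ℝ}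

lemma integral_mul_expect {Z : Ω → ℝ} (hZ : MemLp Z 2 P) (hf : ∀ i, MemLp (f i) 2 P) :
    ∫ ω, Z ω * 𝔼 i, f i ω ∂P = 𝔼 i, ∫ ω, Z ω * f i ω ∂P := by
  simp only [Finset.mul_expect]
  exact integral_expect _ fun i _ => hZ.integrable_mul (hf i)

lemma integral_expect_sq (hf : ∀ i, MemLp (f i) 2 P) :
    ∫ ω, (𝔼 i, f i ω) ^ 2 ∂P = 𝔼 i, 𝔼 j, ∫ ω, f i ω * f j ω ∂P := by
  have integrable_mul : ∀ i j, Integrable (fun ω => f i ω * f j ω) P :=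
    fun i j => (hf i).integrable_mul (hf j)
  simp only [sq, Finset.expect_mul_expect]
  rw [integral_expect]
  · exact Finset.expect_congr rfl fun i _ => integral_expect _ fun j _ => integrable_mul i j
  · intro i _
    simp only [Fintype.expect_eq_sum_div_card]
    exact (integrable_finsetSum _ fun j _ => integrable_mul i j).div_const _

end Averages

section FieldAverages

variable {E Ω : Type*} [MeasurableSpace E] [MeasurableSpace Ω] {P : Measure Ω} {Y : E → Ω → ℝ}

lemma IsCenteredGaussianField.memLp_two (hY : IsCenteredGaussianField P Y) (v : E) :
    MemLp (Y v) 2 P := by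
  simpa using (hY.isCenteredGaussian_sum 1 ![v] ![1]).memLp_two

lemma IsCenteredGaussianField.isCenteredGaussian_add_expect (hY : IsCenteredGaussianField P Y)
    {N : ℕ} (x : Fin N → E) (v : E) (s t : ℝ) :
    IsCenteredGaussian P fun ω => s * Y v ω + t * 𝔼 i, Y (x i) ω := by
  have gaussian_sum := hY.isCenteredGaussian_sum (N + 1) (Fin.cons v x) (Fin.cons s fun _ => t / N)
  simp only [Fin.sum_univ_succ, Fin.cons_zero, Fin.cons_succ, ← Finset.mul_sum] at gaussian_sum
  simpa only [Fintype.expect_eq_sum_div_card, Fintype.card_fin, mul_div_assoc', div_mul_eq_mul_div]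
    using gaussian_sum

lemma IsCenteredGaussianField.measurable_expect (hY : IsCenteredGaussianField P Y)
    {N : ℕ} (x : Fin N → E) : Measurable fun ω => 𝔼 i, Y (x i) ω := by
  have hx : ∀ i, Measurable (Y (x i)) := fun i => hY.measurable.of_uncurry_left
  simp only [Fintype.expect_eq_sum_div_card]
  fun_prop

lemma IsLogCorrelated.exists_average [NormedAddCommGroup E] [NormedSpace ℝ E] [Nontrivial E]
    {ε l c : ℝ} (hlog : IsLogCorrelated P Y ε c) (hY : IsCenteredGaussianField P Y)
    (hε : 0 < ε) (hεl : ε ≤ l) (hl : l ≤ 1) :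
    ∃ Z : Ω → ℝ, Measurable Z ∧ (∀ v s t, IsCenteredGaussian P fun ω => s * Y v ω + t * Z ω) ∧
      ∫ ω, Z ω ^ 2 ∂P ≤ -Real.log l + (c + 3) ∧
      ∀ v, ‖v‖ ≤ l → -Real.log l - (c + 1) ≤ ∫ ω, Y v ω * Z ω ∂P := by
  have hl0 : 0 < l := hε.trans_le hεl
  obtain ⟨N, x, hN, hx, hlogx⟩ := exists_points_expect_neg_log_norm_le E hε hl0 hl
  have : NeZero N := ⟨hN.ne'⟩
  refine ⟨fun ω => 𝔼 i, Y (x i) ω, hY.measurable_expect x, hY.isCenteredGaussian_add_expect x,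
    ?_, fun v hv => ?_⟩
  · rw [integral_expect_sq fun i => hY.memLp_two _]
    calc 𝔼 i, 𝔼 j, ∫ ω, Y (x i) ω * Y (x j) ω ∂P
        ≤ 𝔼 i, 𝔼 j, (-Real.log (max ‖x i - x j‖ ε) + c) := by
          gcongr with i _ j _
          linarith [(abs_le.1 (hlog (x i) (x j) ((hx i).trans hl) ((hx j).trans hl))).2]
      _ = 𝔼 i, 𝔼 j, -Real.log (max ‖x i - x j‖ ε) + c := by
          simp only [Finset.expect_add_distrib, Fintype.expect_const]
      _ ≤ -Real.log l + (c + 3) := by linarith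
  · rw [integral_mul_expect (hY.memLp_two v) fun i => hY.memLp_two _]
    refine Finset.le_expect Finset.univ_nonempty fun i _ => ?_
    have dist_le : ‖v - x i‖ ≤ 2 * l := by linarith [norm_sub_le v (x i), hx i]
    have log_le : Real.log (max ‖v - x i‖ ε) ≤ Real.log (2 * l) :=
      Real.log_le_log (lt_max_of_lt_right hε) (max_le dist_le (by linarith))
    rw [Real.log_mul two_ne_zero hl0.ne'] at log_le
    linarith [(abs_le.1 (hlog v (x i) (hv.trans hl) ((hx i).trans hl))).1,
      Real.log_le_sub_one_of_pos two_pos]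

end FieldAverages

section Shells

section Geometry

variable {E : Type*} [NormedAddCommGroup E] {ε : ℝ}

lemma closedBall_subset_iUnion_dyadicShell (hε0 : 0 < ε) (hε1 : ε ≤ 1) :
    Metric.closedBall (0 : E) 1 ⊆ ⋃ n, dyadicShell E ε n := by
  intro v hv
  obtain ⟨n, hn⟩ := exists_nat_pow_near_of_lt_one (lt_max_of_lt_right hε0)
    (max_le (mem_closedBall_zero_iff.1 hv) hε1) (by norm_num) two_inv_lt_one
  exact Set.mem_iUnion.2 ⟨n, hn⟩

lemma dyadicShell_subset_closedBall (ε : ℝ) (n : ℕ) :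
    dyadicShell E ε n ⊆ Metric.closedBall 0 (2⁻¹ ^ n) :=
  fun _ hv => mem_closedBall_zero_iff.2 ((le_max_left _ _).trans hv.2)

lemma dyadicShell_eq_empty {n : ℕ} (hn : 2⁻¹ ^ n < ε) : dyadicShell E ε n = ∅ :=
  Set.eq_empty_of_forall_notMem fun _ hv => ((le_max_right _ _).trans hv.2).not_gt hn

lemma inv_norm_add_rpow_le_of_mem_dyadicShell (hε : 0 < ε) {n : ℕ} {v : E}
    (hv : v ∈ dyadicShell E ε n) (β : ℝ) :
    ((‖v‖ + ε) ^ β)⁻¹ ≤ 2 ^ |β| * (2⁻¹ ^ n) ^ (-β) := by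
  obtain ⟨lower, upper⟩ := hv
  obtain ⟨norm_le, ε_le⟩ := max_le_iff.1 upper
  refine inv_rpow_le_two_rpow_abs_mul (by positivity) ?_ (by linarith) β
  calc (2⁻¹ : ℝ) ^ n / 2 = 2⁻¹ ^ (n + 1) := by rw [pow_succ, div_eq_mul_inv]
    _ ≤ max ‖v‖ ε := lower.le
    _ ≤ ‖v‖ + ε := max_le_add_of_nonneg (norm_nonneg v) hε.le

lemma measurableSet_dyadicShell [MeasurableSpace E] [OpensMeasurableSpace E] (ε : ℝ) (n : ℕ) :
    MeasurableSet (dyadicShell E ε n) :=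
  (measurable_norm.max measurable_const) measurableSet_Ioc

end Geometry

variable {E Ω : Type*} [NormedAddCommGroup E] [NormedSpace ℝ E] [Nontrivial E]
  [FiniteDimensional ℝ E] [MeasurableSpace E] [BorelSpace E] (μ : Measure E) [μ.IsAddHaarMeasure]
  [MeasurableSpace Ω] {P : Measure Ω} [SFinite P] {Y : E → Ω → ℝ} {ε c : ℝ}

lemma lintegral_rpow_wickExp_closedBall_le (hY : IsCenteredGaussianField P Y)
    (hlog : IsLogCorrelated P Y ε c) {l : ℝ} (hε : 0 < ε) (hεl : ε ≤ l) (hl : l ≤ 1) (γ : ℝ)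
    {a : ℝ} (ha0 : 0 ≤ a) (ha1 : a ≤ 1) :
    ∫⁻ ω, (∫⁻ v in Metric.closedBall 0 l, ENNReal.ofReal (wickExp P γ Y v ω) ∂μ) ^ a ∂P ≤
      (ENNReal.ofReal (Real.exp (γ ^ 2 * (1 - a) * ((3 * c + 5) / 2)) *
        l ^ (Module.finrank ℝ E + γ ^ 2 / 2 * (1 - a))) * μ (Metric.closedBall 0 1)) ^ a := by
  have hl0 : 0 < l := hε.trans_le hεl
  obtain ⟨Z, hZ, hYZ, hV, hD⟩ := hlog.exists_average hY hε hεl hl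
  refine (lintegral_rpow_setLIntegral_wickExp_le hY.measurable hZ hYZ hV
    (fun v hv => hD v (mem_closedBall_zero_iff.1 hv)) γ ha0 ha1).trans_eq ?_
  rw [μ.addHaar_closedBall' 0 hl0.le, ← mul_assoc, ← ENNReal.ofReal_mul (Real.exp_pos _).le,
    Real.rpow_add hl0, Real.rpow_natCast, mul_left_comm, mul_comm (l ^ _),
    Real.rpow_def_of_pos hl0, ← Real.exp_add]
  ring_nf

lemma lintegral_rpow_wickExp_div_dyadicShell_le (hY : IsCenteredGaussianField P Y)
    (hlog : IsLogCorrelated P Y ε c) (hε : 0 < ε) (γ β : ℝ)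
    {a : ℝ} (ha0 : 0 < a) (ha1 : a ≤ 1) (n : ℕ) :
    ∫⁻ ω, (∫⁻ v in dyadicShell E ε n,
        ENNReal.ofReal (wickExp P γ Y v ω / (‖v‖ + ε) ^ β) ∂μ) ^ a ∂P ≤
      (ENNReal.ofReal (2 ^ |β| * Real.exp (γ ^ 2 * (1 - a) * ((3 * c + 5) / 2)) *
        (2⁻¹ ^ n) ^ (Module.finrank ℝ E + γ ^ 2 / 2 * (1 - a) - β)) *
          μ (Metric.closedBall 0 1)) ^ a := by
  rcases lt_or_ge (2⁻¹ ^ n) ε with hn | hn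
  · simp [dyadicShell_eq_empty hn, ha0]
  have weight_le : ∀ ω, ∫⁻ v in dyadicShell E ε n,
      ENNReal.ofReal (wickExp P γ Y v ω / (‖v‖ + ε) ^ β) ∂μ ≤
        ENNReal.ofReal (2 ^ |β| * (2⁻¹ ^ n) ^ (-β)) *
          ∫⁻ v in Metric.closedBall 0 (2⁻¹ ^ n), ENNReal.ofReal (wickExp P γ Y v ω) ∂μ := by
    intro ω
    rw [← lintegral_const_mul' _ _ ENNReal.ofReal_ne_top]
    refine (setLIntegral_mono' (measurableSet_dyadicShell ε n) fun v hv => ?_).trans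
      (lintegral_mono_set (dyadicShell_subset_closedBall ε n))
    rw [← ENNReal.ofReal_mul (by positivity), div_eq_inv_mul]
    gcongr
    · exact (Real.exp_pos _).le
    · exact inv_norm_add_rpow_le_of_mem_dyadicShell hε hv β
  have ball_le := lintegral_rpow_wickExp_closedBall_le μ hY hlog hε hn
    (pow_le_one₀ (by norm_num) two_inv_lt_one.le) γ ha0.le ha1
  refine (lintegral_mono fun ω => ENNReal.rpow_le_rpow (weight_le ω) ha0.le).trans ?_
  simp only [ENNReal.mul_rpow_of_nonneg _ (lintegral _ _) ha0.le]
  rw [lintegral_const_mul' _ _ (ENNReal.rpow_ne_top_of_nonneg ha0.le ENNReal.ofReal_ne_top)]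
  refine (mul_le_mul_right ball_le _).trans_eq ?_
  rw [← ENNReal.mul_rpow_of_nonneg _ _ ha0.le, ← mul_assoc, ← ENNReal.ofReal_mul (by positivity),
    sub_eq_add_neg _ β, Real.rpow_add (by positivity) _ (-β)]
  ring_nf

lemma lintegral_rpow_wickExp_div_le_tsum (hY : IsCenteredGaussianField P Y)
    (hlog : IsLogCorrelated P Y ε c) (hε0 : 0 < ε) (hε1 : ε ≤ 1) {Q : Set E}
    (hQ : Q ⊆ Metric.closedBall 0 1) (γ β : ℝ) {a : ℝ} (ha0 : 0 < a) (ha1 : a ≤ 1) :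
    ∫⁻ ω, (∫⁻ v in Q, ENNReal.ofReal (wickExp P γ Y v ω / (‖v‖ + ε) ^ β) ∂μ) ^ a ∂P ≤
      ∑' n : ℕ, (ENNReal.ofReal (2 ^ |β| * Real.exp (γ ^ 2 * (1 - a) * ((3 * c + 5) / 2)) *
        (2⁻¹ ^ n) ^ (Module.finrank ℝ E + γ ^ 2 / 2 * (1 - a) - β)) *
          μ (Metric.closedBall 0 1)) ^ a := by
  have hW := measurable_uncurry_wickExp (P := P) hY.measurable γ
  have measurable_density :
      Measurable fun p : E × Ω => ENNReal.ofReal (wickExp P γ Y p.1 p.2 / (‖p.1‖ + ε) ^ β) := by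
    fun_prop
  have shells_le : ∀ ω,
      (∫⁻ v in Q, ENNReal.ofReal (wickExp P γ Y v ω / (‖v‖ + ε) ^ β) ∂μ) ^ a ≤
        ∑' n, (∫⁻ v in dyadicShell E ε n,
          ENNReal.ofReal (wickExp P γ Y v ω / (‖v‖ + ε) ^ β) ∂μ) ^ a := fun ω =>
    (ENNReal.rpow_le_rpow ((lintegral_mono_set (hQ.trans
      (closedBall_subset_iUnion_dyadicShell hε0 hε1))).trans (lintegral_iUnion_le _ _))
        ha0.le).trans (ennreal_rpow_tsum_le_tsum_rpow _ ha0 ha1)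
  refine (lintegral_mono shells_le).trans ?_
  rw [lintegral_tsum fun n => (measurable_density.lintegral_prod_left'.pow_const a).aemeasurable]
  exact ENNReal.tsum_le_tsum fun n =>
    lintegral_rpow_wickExp_div_dyadicShell_le μ hY hlog hε0 γ β ha0 ha1 n

end Shells

lemma tsum_ofReal_mul_geometric_rpow_ne_top {κ a : ℝ} (hκ : 0 < κ) (ha : 0 < a) (C : ℝ)
    {m : ENNReal} (hm : m ≠ ⊤) :
    ∑' n : ℕ, (ENNReal.ofReal (C * (2⁻¹ ^ n) ^ κ) * m) ^ a ≠ ⊤ := by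
  set q : ENNReal := ENNReal.ofReal (2⁻¹ ^ κ) ^ a with hq
  have q_lt_one : q < 1 := ENNReal.rpow_lt_one
    (ENNReal.ofReal_lt_one.2 (Real.rpow_lt_one (by norm_num) two_inv_lt_one hκ)) ha
  have term_eq : ∀ n : ℕ, (ENNReal.ofReal (C * (2⁻¹ ^ n) ^ κ) * m) ^ a =
      (ENNReal.ofReal C * m) ^ a * q ^ n := by
    intro n
    rw [hq, ← ENNReal.rpow_mul_natCast, mul_comm a, ENNReal.rpow_natCast_mul,
      ← ENNReal.ofReal_pow (by positivity), Real.rpow_pow_comm (by norm_num),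
      ← ENNReal.mul_rpow_of_nonneg _ _ ha.le, mul_right_comm, ← ENNReal.ofReal_mul' (by positivity)]
  simp only [term_eq]
  rw [ENNReal.tsum_mul_left, ENNReal.tsum_geometric]
  exact ENNReal.mul_ne_top
    (ENNReal.rpow_ne_top_of_nonneg ha.le (ENNReal.mul_ne_top ENNReal.ofReal_ne_top hm))
    (ENNReal.inv_ne_top.2 (tsub_pos_of_lt q_lt_one).ne')

theorem uniform_fractional_moment_bound_general {E Ω : Type*} [NormedAddCommGroup E]
    [NormedSpace ℝ E] [Nontrivial E] [FiniteDimensional ℝ E] [MeasurableSpace E] [BorelSpace E]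
    (μ : Measure E) [μ.IsAddHaarMeasure] [MeasurableSpace Ω] (P : Measure Ω)
    [IsProbabilityMeasure P] (X : ℝ → E → Ω → ℝ) {c : ℝ}
    (hX : ∀ ε, 0 < ε → ε ≤ 1 → IsCenteredGaussianField P (X ε))
    (hlog : ∀ ε, 0 < ε → ε ≤ 1 → IsLogCorrelated P (X ε) ε c)
    {Q : Set E} (hQ : Q ⊆ Metric.closedBall 0 1) {γ β a : ℝ} (ha0 : 0 < a) (ha1 : a ≤ 1)
    (hβ : β < Module.finrank ℝ E + γ ^ 2 / 2 * (1 - a)) :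
    ∃ C : ℝ, 0 < C ∧ ∀ ε, 0 < ε → ε ≤ 1 →
      ∫⁻ ω, ENNReal.ofReal ((∫ v in Q, wickExp P γ (X ε) v ω / (‖v‖ + ε) ^ β ∂μ) ^ a) ∂P
        ≤ ENNReal.ofReal C := by
  obtain ⟨B, hB⟩ := WithTop.ne_top_iff_exists.1 <|
    tsum_ofReal_mul_geometric_rpow_ne_top (sub_pos.2 hβ) ha0
      (2 ^ |β| * Real.exp (γ ^ 2 * (1 - a) * ((3 * c + 5) / 2)))
      (measure_closedBall_lt_top (μ := μ) (x := 0) (r := 1)).ne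
  refine ⟨B + 1, by positivity, fun ε hε0 hε1 => ?_⟩
  have measurable_density :
      ∀ ω, Measurable fun v => wickExp P γ (X ε) v ω / (‖v‖ + ε) ^ β := fun ω => by
    have := (measurable_uncurry_wickExp (P := P) (hX ε hε0 hε1).measurable γ).of_uncurry_right
      (y := ω)
    fun_prop
  calc _ ≤ ∫⁻ ω, (∫⁻ v in Q, ENNReal.ofReal (wickExp P γ (X ε) v ω / (‖v‖ + ε) ^ β) ∂μ) ^ a ∂P :=
        lintegral_mono fun ω => ofReal_integral_rpow_le_lintegral_rpow
          (fun v => div_nonneg (Real.exp_pos _).le (by positivity))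
          (measurable_density ω).aestronglyMeasurable ha0.le
    _ ≤ _ := lintegral_rpow_wickExp_div_le_tsum μ (hX ε hε0 hε1) (hlog ε hε0 hε1) hε0 hε1 hQ γ β
        ha0 ha1
    _ = ENNReal.ofReal B := hB.symm.trans ENNReal.ofReal_coe_nnreal.symm
    _ ≤ ENNReal.ofReal (B + 1) := ENNReal.ofReal_le_ofReal (le_add_of_nonneg_right zero_le_one)

section ExactCovariance

lemma abs_exactCov_add_log_max_le {ε r : ℝ} (hε0 : 0 < ε) (hε1 : ε ≤ 1) (hr : r ≤ 2) :
    |exactCov ε r + Real.log (max r ε)| ≤ 2 := by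
  unfold exactCov
  split_ifs with one_lt ε_le
  · rw [zero_add, max_eq_left (hε1.trans one_lt.le), abs_of_nonneg (Real.log_nonneg one_lt.le)]
    linarith [Real.log_le_sub_one_of_pos (one_pos.trans one_lt)]
  · rw [max_eq_left ε_le, one_div, Real.log_inv, neg_add_cancel, abs_zero]
    exact zero_le_two
  · have hrε : r ≤ ε := (not_le.1 ε_le).le
    have sqrt_div_le : √r / √ε ≤ 1 := div_le_one_of_le₀ (Real.sqrt_le_sqrt hrε) (Real.sqrt_nonneg ε)
    have sqrt_div_nonneg : 0 ≤ √r / √ε := by positivity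
    rw [max_eq_right hrε, one_div, Real.log_inv, neg_add_cancel_comm, abs_le]
    constructor <;> linarith

lemma isLogCorrelated_of_exactCov {E Ω : Type*} [NormedAddCommGroup E] [MeasurableSpace Ω]
    {P : Measure Ω} {Y : E → Ω → ℝ} {ε : ℝ} (hε0 : 0 < ε) (hε1 : ε ≤ 1)
    (hcov : ∀ x y, ∫ ω, Y x ω * Y y ω ∂P = exactCov ε ‖x - y‖) : IsLogCorrelated P Y ε 2 := by
  intro x y hx hy
  rw [hcov]
  exact abs_exactCov_add_log_max_le hε0 hε1 (by linarith [norm_sub_le x y])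

end ExactCovariance

lemma square_subset_closedBall :
    {v : EuclideanSpace ℝ (Fin 2) | ∀ i, v i ∈ Set.Icc (0 : ℝ) (1 / 2)} ⊆
      Metric.closedBall 0 1 := by
  intro v hv
  have coord_sq_le : ∀ i, v i ^ 2 ≤ 1 / 4 := fun i => by nlinarith [(hv i).1, (hv i).2]
  rw [mem_closedBall_zero_iff, ← sq_le_one_iff₀ (norm_nonneg v), EuclideanSpace.real_norm_sq_eq,
    Fin.sum_univ_two]
  linarith [coord_sq_le 0, coord_sq_le 1]

/-- **Uniform fractional-moment bound for the singular integral of an exactly scale-invariant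
field** (Lemma A of the multifractal analysis, `d = 2`). If `γ ∈ [0,2)` and `a ∈ (0,1]`
satisfies `(2 − γ²/2)a − (γ²/2)a² > 0`, then
`E[(∫_{[0,1/2]²} e^{γX̄_ε(v) − (γ²/2)E[X̄_ε(v)²]} (|v|+ε)^{−γ²} dv)^a]` is bounded uniformly
in `ε ∈ (0,1]`. -/
theorem uniform_fractional_moment_bound
    {Ω : Type*} [MeasurableSpace Ω] (P : Measure Ω) [IsProbabilityMeasure P]
    (X : ℝ → EuclideanSpace ℝ (Fin 2) → Ω → ℝ)
    (hXmeas : ∀ ε : ℝ, 0 < ε → ε ≤ 1 →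
      Measurable (fun p : EuclideanSpace ℝ (Fin 2) × Ω => X ε p.1 p.2))
    (hXgauss : ∀ ε : ℝ, 0 < ε → ε ≤ 1 →
      ∀ (m : ℕ) (xs : Fin m → EuclideanSpace ℝ (Fin 2)) (c : Fin m → ℝ),
        IsCenteredGaussian P (fun ω => ∑ i, c i * X ε (xs i) ω))
    (hXcov : ∀ ε : ℝ, 0 < ε → ε ≤ 1 → ∀ x y : EuclideanSpace ℝ (Fin 2),
      ∫ ω, X ε x ω * X ε y ω ∂P = exactCov ε ‖x - y‖)
    (γ : ℝ) (hγ0 : 0 ≤ γ) (hγ2 : γ < 2)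
    (a : ℝ) (ha0 : 0 < a) (ha1 : a ≤ 1)
    (ha : 0 < (2 - γ ^ 2 / 2) * a - γ ^ 2 / 2 * a ^ 2) :
    ∃ C : ℝ, 0 < C ∧ ∀ ε : ℝ, 0 < ε → ε ≤ 1 →
      ∫⁻ ω, ENNReal.ofReal
          ((∫ v in {v : EuclideanSpace ℝ (Fin 2) | ∀ i, v i ∈ Set.Icc (0 : ℝ) (1 / 2)},
            Real.exp (γ * X ε v ω - γ ^ 2 / 2 * (∫ ω', (X ε v ω') ^ 2 ∂P))
              / (‖v‖ + ε) ^ (γ ^ 2)) ^ a) ∂P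
        ≤ ENNReal.ofReal C := by
  have exponent_lt : γ ^ 2 < 2 + γ ^ 2 / 2 * (1 - a) :=
    lt_of_mul_lt_mul_left (a := a) (by linarith) ha0.le
  exact uniform_fractional_moment_bound_general volume P X
    (fun ε hε0 hε1 => ⟨hXmeas ε hε0 hε1, hXgauss ε hε0 hε1⟩)
    (fun ε hε0 hε1 => isLogCorrelated_of_exactCov hε0 hε1 (hXcov ε hε0 hε1))
    square_subset_closedBall ha0 ha1 (by simpa using exponent_lt)
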